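/- For every integer k ≥ 2 there exists a constant c = c(k) > 0 with the following property. Let G_< be an ordered graph on n vertices such that every vertex of G_< has degree less than c·n, and such that G_< does not contain the monotone path P_k of length k as an induced ordered subgraph. Then the complement of G_< contains a bi-clique of size at least c·n/log₂ n. -/

import Mathlib

/-- A graph `G` contains a bi-clique of size at least `x`: a pair `(A, B)` of disjoint
vertex subsets with `|A| = |B| ≥ x` such that every vertex of `A` is adjacent to every
vertex of `B`. -/
def HasBicliqueGe {V : Type*} (G : SimpleGraph V) (x : ℝ) : Prop :=
  ∃ A B : Finset V, Disjoint A B ∧ A.card = B.card ∧ x ≤ (A.card : ℝ) ∧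
    ∀ a ∈ A, ∀ b ∈ B, G.Adj a b

/-- The ordered graph `H` (on `Fin a` with its natural order) is contained in the ordered
graph `G` (on `Fin b` with its natural order) as an induced ordered subgraph. -/
def ContainsOrdered {a b : ℕ} (H : SimpleGraph (Fin a)) (G : SimpleGraph (Fin b)) : Prop :=
  ∃ φ : Fin a → Fin b, StrictMono φ ∧ ∀ u v : Fin a, H.Adj u v ↔ G.Adj (φ u) (φ v)

/-- The monotone path `P_k` with `k` vertices `v₁ < v₂ < ⋯ < v_k`, where `v_i v_j` is an
edge iff `|i - j| = 1`. -/
def monotonePath (k : ℕ) : SimpleGraph (Fin k) :=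
  SimpleGraph.fromRel (fun i j => (i : ℕ) + 1 = (j : ℕ))

/-!
Suppose the complement of `G` has no bi-clique of size `m`, so any two disjoint `m`-sets of vertices
span an edge of `G`. If `m` vertices `S` lie below `T` and are reached from `X` by increasing paths,
then all but fewer than `m` vertices of `T` are reached as well. Alternately halving `X` (some half
still reaches half of `S`) and replenishing `S` from the bottom of `T` isolates, after
`log₂ |X|` rounds of cost `3m`, a single `x ∈ X` reaching many vertices. Now apply this to the
up-neighbours of the current path end `v`, after deleting the rest of the neighbourhood of `v`: a
vertex reached from `v` is reached, past the last neighbour of `v` on the path to it, outside the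
neighbourhood of `v`. Hence the induced path extends by one vertex at cost `O(m log n + Δ)`, and
this can be afforded `k` times when `m ≈ c n / log n` and `Δ < c n`.
-/

open Finset

section Precedes

variable {V : Type*} [LinearOrder V] {S S' T T' : Finset V}

/-- Every element of `S` lies strictly below every element of `T`. -/
def Precedes (S T : Finset V) : Prop :=
  ∀ s ∈ S, ∀ t ∈ T, s < t

lemma Precedes.mono (h : Precedes S T) (hS : S' ⊆ S) (hT : T' ⊆ T) : Precedes S' T' :=
  fun s hs t ht => h s (hS hs) t (hT ht)

lemma exists_subset_card_eq_precedes_sdiff (T : Finset V) {j : ℕ} (hj : j ≤ #T) :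
    ∃ L ⊆ T, #L = j ∧ Precedes L (T \ L) := by
  induction T using Finset.induction_on_max with
  | empty => exact ⟨∅, Subset.rfl, by simpa [eq_comm] using hj, by simp [Precedes]⟩
  | insert a T ha ih =>
    have haT : a ∉ T := fun h => (ha a h).false
    rcases hj.eq_or_lt with rfl | hlt
    · exact ⟨insert a T, Subset.rfl, rfl, by simp [Precedes]⟩
    · rw [card_insert_of_notMem haT, Nat.lt_succ_iff] at hlt
      obtain ⟨L, hLT, hLj, hL⟩ := ih hlt
      refine ⟨L, hLT.trans (subset_insert a T), hLj, fun s hs t ht => ?_⟩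
      obtain ⟨htT, htL⟩ := mem_sdiff.1 ht
      rcases mem_insert.1 htT with rfl | htT
      · exact ha s (hLT hs)
      · exact hL s hs t (mem_sdiff.2 ⟨htT, htL⟩)

end Precedes

section IsJoined

variable {V : Type*} {G : SimpleGraph V} {m : ℕ} {x : ℝ}

/-- `G` is `m`-joined: any two disjoint sets of at least `m` vertices span an edge, that is, the
complement of `G` has no bi-clique of size `m`. -/
def IsJoined (G : SimpleGraph V) (m : ℕ) : Prop :=
  ∀ A B : Finset V, Disjoint A B → m ≤ #A → m ≤ #B → ∃ a ∈ A, ∃ b ∈ B, G.Adj a b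

lemma IsJoined.pos (hG : IsJoined G m) : 0 < m := by
  by_contra! hm
  obtain ⟨a, ha, -⟩ := hG ∅ ∅ (disjoint_empty_left ∅) (by simpa using hm) (by simpa using hm)
  exact notMem_empty a ha

lemma isJoined_natCeil_of_not_hasBicliqueGe_compl (h : ¬ HasBicliqueGe Gᶜ x) :
    IsJoined G ⌈x⌉₊ := by
  intro A B hAB hA hB
  by_contra! hnot
  obtain ⟨A', hA', hA'card⟩ := exists_subset_card_eq hA
  obtain ⟨B', hB', hB'card⟩ := exists_subset_card_eq hB
  have hdisj : Disjoint A' B' := hAB.mono hA' hB'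
  refine h ⟨A', B', hdisj, hA'card.trans hB'card.symm, hA'card ▸ Nat.le_ceil x, ?_⟩
  exact fun a ha b hb =>
    (G.compl_adj a b).2 ⟨disjoint_iff_ne.1 hdisj a ha b hb, hnot a (hA' ha) b (hB' hb)⟩

lemma hasBicliqueGe_of_nonpos (G : SimpleGraph V) (hx : x ≤ 0) : HasBicliqueGe G x :=
  ⟨∅, ∅, disjoint_empty_left ∅, rfl, by simpa using hx, by simp⟩

lemma hasBicliqueGe_of_adj {v w : V} (hvw : G.Adj v w) (hx : x ≤ 1) : HasBicliqueGe G x :=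
  ⟨{v}, {w}, by simpa using hvw.ne, rfl, by simpa using hx, by simpa using hvw⟩

lemma hasBicliqueGe_compl_of_maxDegree_add_one_lt [Fintype V] [DecidableRel G.Adj]
    (hG : G.maxDegree + 1 < Fintype.card V) (hx : x ≤ 1) : HasBicliqueGe Gᶜ x := by
  classical
  obtain ⟨v⟩ : Nonempty V := Fintype.card_pos_iff.1 (by omega)
  have hv : G.degree v ≤ G.maxDegree := G.degree_le_maxDegree v
  have hpos : 0 < Gᶜ.degree v := by rw [G.degree_compl]; omega
  obtain ⟨w, hvw⟩ := (Gᶜ.degree_pos_iff_exists_adj v).1 hpos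
  exact hasBicliqueGe_of_adj hvw hx

end IsJoined

section MonotoneReach

variable {V : Type*} [LinearOrder V] {G : SimpleGraph V} {W : Finset V} {a b v : V}

/-- The relation whose chains are the increasing paths of `G` all of whose vertices, except possibly
the first one, lie in `W`. -/
def MonotoneStep (G : SimpleGraph V) (W : Finset V) (a b : V) : Prop :=
  a < b ∧ G.Adj a b ∧ b ∈ W

lemma le_of_reflTransGen_monotoneStep (h : Relation.ReflTransGen (MonotoneStep G W) a b) :
    a ≤ b := by
  induction h with
  | refl => exact le_rfl
  | tail _ hstep ih => exact ih.trans hstep.1.le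

variable [Fintype V] {X Y : Finset V}

open Classical in
/-- The vertices reached from `X` by increasing paths of `G` inside `W`, including `X` itself: the
first vertex of a path need not lie in `W`. -/
noncomputable def monotoneReach (G : SimpleGraph V) (W X : Finset V) : Finset V :=
  {s | ∃ x ∈ X, Relation.ReflTransGen (MonotoneStep G W) x s}

lemma mem_monotoneReach :
    b ∈ monotoneReach G W X ↔ ∃ x ∈ X, Relation.ReflTransGen (MonotoneStep G W) x b := by
  simp [monotoneReach]

lemma subset_monotoneReach : X ⊆ monotoneReach G W X :=
  fun x hx => mem_monotoneReach.2 ⟨x, hx, .refl⟩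

lemma mem_monotoneReach_of_monotoneStep (h : MonotoneStep G W a b)
    (ha : a ∈ monotoneReach G W X) : b ∈ monotoneReach G W X := by
  obtain ⟨x, hx, hxa⟩ := mem_monotoneReach.1 ha
  exact mem_monotoneReach.2 ⟨x, hx, hxa.tail h⟩

lemma monotoneReach_union :
    monotoneReach G W (X ∪ Y) = monotoneReach G W X ∪ monotoneReach G W Y := by
  ext b
  simp only [mem_monotoneReach, mem_union, or_and_right, exists_or]

-- Keep the part of the path from `v` that starts at its last neighbour of `v`.
lemma monotoneReach_singleton_erase_subset [DecidableRel G.Adj] :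
    (monotoneReach G W {v}).erase v ⊆
      monotoneReach G (W \ G.neighborFinset v) {x ∈ W | v < x ∧ G.Adj v x} := by
  intro s hs
  obtain ⟨hsv, hs⟩ := mem_erase.1 hs
  simp only [mem_monotoneReach, mem_singleton, exists_eq_left] at hs
  induction hs with
  | refl => exact absurd rfl hsv
  | @tail b c hvb hbc ih =>
    obtain ⟨hlt, hadj, hcW⟩ := hbc
    by_cases hvc : G.Adj v c
    · have hv_lt : v < c := (le_of_reflTransGen_monotoneStep hvb).trans_lt hlt
      exact subset_monotoneReach (mem_filter.2 ⟨hcW, hv_lt, hvc⟩)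
    · have hbv : b ≠ v := fun h => hvc (h ▸ hadj)
      have hstep : MonotoneStep G (W \ G.neighborFinset v) b c :=
        ⟨hlt, hadj, by simpa [hcW] using hvc⟩
      exact mem_monotoneReach_of_monotoneStep hstep (ih (by simp [hbv, mem_monotoneReach, hvb]) hbv)

end MonotoneReach

section IsFrontier

variable {V : Type*} [LinearOrder V] [Fintype V] {G : SimpleGraph V} {W X Y S T : Finset V}
  {m q r t : ℕ} {v : V}

/-- The state of the search for increasing paths inside `W`: the vertices of `S` are reached from
`X`, and `T` is the part of `W` above `S` still to be explored. -/
structure IsFrontier (G : SimpleGraph V) (W X S T : Finset V) : Prop where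
  subset_reach : S ⊆ monotoneReach G W X
  precedes : Precedes S T
  subset_region : T ⊆ W

namespace IsFrontier

lemma card_sdiff_monotoneReach_lt (hG : IsJoined G m) (h : IsFrontier G W X S T) (hS : m ≤ #S) :
    #(T \ monotoneReach G W X) < m := by
  by_contra! hcard
  have hprec : Precedes S (T \ monotoneReach G W X) := h.precedes.mono Subset.rfl sdiff_subset
  have hdisj : Disjoint S (T \ monotoneReach G W X) :=
    disjoint_iff_ne.2 fun s hs b hb => (hprec s hs b hb).ne
  obtain ⟨s, hs, b, hb, hsb⟩ := hG _ _ hdisj hS hcard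
  obtain ⟨hbT, hb_not⟩ := mem_sdiff.1 hb
  have hstep : MonotoneStep G W s b := ⟨hprec s hs b hb, hsb, h.subset_region hbT⟩
  exact hb_not (mem_monotoneReach_of_monotoneStep hstep (h.subset_reach hs))

lemma exists_advance (hG : IsJoined G m) (h : IsFrontier G W X S T) (hS : m ≤ #S)
    (hT : (q + m) + r ≤ #T) :
    ∃ S' T', IsFrontier G W X S' T' ∧ q ≤ #S' ∧ r ≤ #T' := by
  obtain ⟨L, hLT, hLcard, hL⟩ := exists_subset_card_eq_precedes_sdiff T (j := q + m) (by omega)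
  have hfrontier : IsFrontier G W X S L :=
    ⟨h.subset_reach, h.precedes.mono Subset.rfl hLT, hLT.trans h.subset_region⟩
  have hunreached : #(L \ monotoneReach G W X) < m := hfrontier.card_sdiff_monotoneReach_lt hG hS
  have hcard := card_inter_add_card_sdiff L (monotoneReach G W X)
  refine ⟨L ∩ monotoneReach G W X, T \ L, ⟨inter_subset_right, ?_, ?_⟩, by omega, ?_⟩
  · exact hL.mono inter_subset_left Subset.rfl
  · exact sdiff_subset.trans h.subset_region
  · rw [card_sdiff_of_subset hLT]
    omega

lemma exists_of_union (h : IsFrontier G W (X ∪ Y) S T) (hS : 2 * m ≤ #S) :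
    (∃ S', IsFrontier G W X S' T ∧ m ≤ #S') ∨ ∃ S', IsFrontier G W Y S' T ∧ m ≤ #S' := by
  have hrestrict (Z : Finset V) : IsFrontier G W Z (S ∩ monotoneReach G W Z) T :=
    ⟨inter_subset_right, h.precedes.mono inter_subset_left Subset.rfl, h.subset_region⟩
  have hcover : S = S ∩ monotoneReach G W X ∪ S ∩ monotoneReach G W Y := by
    rw [← inter_union_distrib_left, ← monotoneReach_union, inter_eq_left.2 h.subset_reach]
  have hcard : #S ≤ #(S ∩ monotoneReach G W X) + #(S ∩ monotoneReach G W Y) :=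
    (congrArg card hcover).trans_le (card_union_le _ _)
  rcases le_or_gt m #(S ∩ monotoneReach G W X) with hX | hX
  · exact .inl ⟨_, hrestrict X, hX⟩
  · exact .inr ⟨_, hrestrict Y, by omega⟩

lemma exists_singleton_of_card_le_two_pow (hG : IsJoined G m) (h : IsFrontier G W X S T)
    (hX : #X ≤ 2 ^ t) (hS : 2 * m ≤ #S) (hT : 3 * m * t + r ≤ #T) :
    ∃ x ∈ X, ∃ S' T', IsFrontier G W {x} S' T' ∧ 2 * m ≤ #S' ∧ r ≤ #T' := by
  induction t generalizing X S T with
  | zero =>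
    have hm := hG.pos
    obtain ⟨s, hs⟩ : S.Nonempty := card_pos.1 (by omega)
    obtain ⟨x, hx, -⟩ := mem_monotoneReach.1 (h.subset_reach hs)
    obtain rfl : X = {x} := eq_singleton_iff_unique_mem.2
      ⟨hx, fun y hy => card_le_one.1 (by simpa using hX) y hy x hx⟩
    exact ⟨x, hx, S, T, h, hS, by omega⟩
  | succ t ih =>
    rw [pow_succ] at hX
    have descend {X' S₁ : Finset V} (hX'X : X' ⊆ X) (hX' : #X' ≤ 2 ^ t)
        (h₁ : IsFrontier G W X' S₁ T) (hS₁ : m ≤ #S₁) :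
        ∃ x ∈ X, ∃ S' T', IsFrontier G W {x} S' T' ∧ 2 * m ≤ #S' ∧ r ≤ #T' := by
      obtain ⟨S₂, T₂, h₂, hS₂, hT₂⟩ :=
        h₁.exists_advance hG hS₁ (q := 2 * m) (r := 3 * m * t + r) (by linarith)
      obtain ⟨x, hx, hfrontier⟩ := ih h₂ hX' hS₂ hT₂
      exact ⟨x, hX'X hx, hfrontier⟩
    obtain ⟨Y, hYX, hYcard⟩ := exists_subset_card_eq (Nat.div_le_self #X 2)
    have hrest : #(X \ Y) = #X - #Y := card_sdiff_of_subset hYX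
    rw [← union_sdiff_of_subset hYX] at h
    rcases h.exists_of_union hS with ⟨S₁, h₁, hS₁⟩ | ⟨S₁, h₁, hS₁⟩
    · exact descend hYX (by omega) h₁ hS₁
    · exact descend sdiff_subset (by omega) h₁ hS₁

lemma exists_singleton (hG : IsJoined G m) (h : IsFrontier G W X S T)
    (hX : #X ≤ 2 ^ t) (hS : 2 * m ≤ #S) (hT : 3 * m * t + (q + m) + r ≤ #T) :
    ∃ x ∈ X, ∃ S' T', IsFrontier G W {x} S' T' ∧ q ≤ #S' ∧ r ≤ #T' := by
  obtain ⟨x, hx, S₁, T₁, h₁, hS₁, hT₁⟩ :=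
    h.exists_singleton_of_card_le_two_pow hG hX hS (r := (q + m) + r) (by omega)
  exact ⟨x, hx, h₁.exists_advance hG (by omega) hT₁⟩

lemma sdiff_neighborFinset [DecidableRel G.Adj] (h : IsFrontier G W {v} S T) :
    IsFrontier G (W \ G.neighborFinset v) {x ∈ W | v < x ∧ G.Adj v x} (S.erase v)
      (T \ G.neighborFinset v) where
  subset_reach := (erase_subset_erase v h.subset_reach).trans monotoneReach_singleton_erase_subset
  precedes := h.precedes.mono (erase_subset v S) sdiff_subset
  subset_region := sdiff_subset_sdiff h.subset_region Subset.rfl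

end IsFrontier

end IsFrontier

section IsInducedMonotonePath

variable {V : Type*} [LinearOrder V] {G : SimpleGraph V} {r : ℕ}

lemma monotonePath_adj_zero_succ (j : Fin (r + 1)) :
    (monotonePath (r + 2)).Adj 0 j.succ ↔ j = 0 := by
  simp only [monotonePath, SimpleGraph.fromRel_adj, ne_eq, Fin.ext_iff, Fin.val_zero, Fin.val_succ]
  omega

lemma monotonePath_adj_succ_succ (i j : Fin r) :
    (monotonePath (r + 1)).Adj i.succ j.succ ↔ (monotonePath r).Adj i j := by
  simp [monotonePath]

/-- The vertices `φ 0 < φ 1 < ⋯` induce a monotone path in `G`; this is `ContainsOrdered` for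
`monotonePath k`, with a named embedding and an arbitrary vertex order. -/
def IsInducedMonotonePath {k : ℕ} (G : SimpleGraph V) (φ : Fin k → V) : Prop :=
  StrictMono φ ∧ ∀ i j, (monotonePath k).Adj i j ↔ G.Adj (φ i) (φ j)

lemma isInducedMonotonePath_singleton (G : SimpleGraph V) (v : V) :
    IsInducedMonotonePath G ![v] :=
  ⟨Subsingleton.strictMono _, fun i j => by simp [Subsingleton.elim i j]⟩

lemma IsInducedMonotonePath.vecCons {φ : Fin (r + 1) → V} {v : V}
    (hφ : IsInducedMonotonePath G φ) (hlt : v < φ 0) (hadj : G.Adj v (φ 0))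
    (hnot : ∀ i : Fin r, ¬ G.Adj v (φ i.succ)) : IsInducedMonotonePath G (Matrix.vecCons v φ) := by
  have hhead (j : Fin (r + 1)) : (monotonePath (r + 2)).Adj 0 j.succ ↔ G.Adj v (φ j) := by
    rw [monotonePath_adj_zero_succ]
    cases j using Fin.cases with
    | zero => simpa using hadj
    | succ j => simpa using hnot j
  refine ⟨hφ.1.vecCons hlt, fun i j => ?_⟩
  cases i using Fin.cases with
  | zero =>
    cases j using Fin.cases with
    | zero => simp
    | succ j => exact hhead j
  | succ i =>
    cases j using Fin.cases with
    | zero =>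
      rw [SimpleGraph.adj_comm, G.adj_comm]
      exact hhead i
    | succ j => exact (monotonePath_adj_succ_succ i j).trans (hφ.2 i j)

/-- The number of vertices used up by one extension of the path in an `m`-joined graph with at most
`2 ^ t` vertices and maximum degree `D`: the `t` halving rounds take `3 * m` vertices each, the last
replenishment to `2 * m + 1` reached vertices takes `3 * m + 1`, and the neighbourhood of the path
end takes `D`. -/
def extensionCost (m t D : ℕ) : ℕ :=
  3 * m * t + 3 * m + D + 1

variable [Fintype V] [DecidableRel G.Adj] {m t : ℕ}

lemma IsFrontier.exists_isInducedMonotonePath (hG : IsJoined G m) (ht : Fintype.card V ≤ 2 ^ t)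
    {v : V} {W S T : Finset V} (h : IsFrontier G W {v} S T) (hS : 2 * m + 1 ≤ #S)
    (hT : r * extensionCost m t G.maxDegree ≤ #T) :
    ∃ φ : Fin (r + 1) → V,
      IsInducedMonotonePath G φ ∧ φ 0 = v ∧ ∀ i : Fin r, φ i.succ ∈ W := by
  induction r generalizing v W S T with
  | zero => exact ⟨![v], isInducedMonotonePath_singleton G v, rfl, Fin.rec0⟩
  | succ r ih =>
    have hS' : #S - 1 ≤ #(S.erase v) := pred_card_le_card_erase
    have hT' : #T - #(G.neighborFinset v) ≤ #(T \ G.neighborFinset v) := le_card_sdiff _ _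
    have hdeg : #(G.neighborFinset v) ≤ G.maxDegree := G.degree_le_maxDegree v
    have hcost : extensionCost m t G.maxDegree = 3 * m * t + 3 * m + G.maxDegree + 1 := rfl
    rw [Nat.succ_mul] at hT
    obtain ⟨x, hx, S₁, T₁, h₁, hS₁, hT₁⟩ := h.sdiff_neighborFinset.exists_singleton hG
      ((card_le_univ _).trans ht) (by omega) (q := 2 * m + 1)
      (r := r * extensionCost m t G.maxDegree) (by omega)
    obtain ⟨φ, hφ, rfl, hφW⟩ := ih h₁ hS₁ hT₁
    obtain ⟨hxW, hvx, hadj⟩ := mem_filter.1 hx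
    have hφ_not (i : Fin r) : ¬ G.Adj v (φ i.succ) := by simpa using (mem_sdiff.1 (hφW i)).2
    refine ⟨Matrix.vecCons v φ, hφ.vecCons hvx hadj hφ_not, rfl, ?_⟩
    exact Fin.cases hxW fun i => (mem_sdiff.1 (hφW i)).1

lemma IsJoined.exists_isInducedMonotonePath (hG : IsJoined G m) (ht : Fintype.card V ≤ 2 ^ t)
    (hcard : (r + 2) * extensionCost m t G.maxDegree ≤ Fintype.card V) :
    ∃ φ : Fin (r + 1) → V, IsInducedMonotonePath G φ := by
  have hcost : extensionCost m t G.maxDegree = 3 * m * t + 3 * m + G.maxDegree + 1 := rfl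
  rw [add_mul] at hcard
  obtain ⟨S, -, hScard, hS⟩ :=
    exists_subset_card_eq_precedes_sdiff (univ : Finset V) (j := 2 * m) (by rw [card_univ]; omega)
  have hfrontier : IsFrontier G univ S S (univ \ S) := ⟨subset_monotoneReach, hS, sdiff_subset⟩
  have hrest : #(univ \ S) = Fintype.card V - #S := card_univ_sdiff S
  obtain ⟨v, -, S₁, T₁, h₁, hS₁, hT₁⟩ := hfrontier.exists_singleton hG
    ((card_le_univ _).trans ht) hScard.ge (q := 2 * m + 1)
    (r := r * extensionCost m t G.maxDegree) (by omega)
  obtain ⟨φ, hφ, -⟩ := h₁.exists_isInducedMonotonePath hG ht hS₁ hT₁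
  exact ⟨φ, hφ⟩

end IsInducedMonotonePath

lemma maxDegree_lt_of_forall_ncard_neighborSet_lt {V : Type*} [Fintype V] [Nonempty V]
    {G : SimpleGraph V} [DecidableRel G.Adj] {x : ℝ}
    (h : ∀ v, ((G.neighborSet v).ncard : ℝ) < x) : (G.maxDegree : ℝ) < x := by
  obtain ⟨v, hv⟩ := G.exists_maximal_degree_vertex
  rw [hv, ← G.card_neighborFinset_eq_degree, ← Set.ncard_coe_finset, G.coe_neighborFinset]
  exact h v

lemma one_le_logb_two_natCast {n : ℕ} (hn : 2 ≤ n) : 1 ≤ Real.logb 2 n := by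
  rw [Real.le_logb_iff_rpow_le one_lt_two (by positivity)]
  simpa using (Nat.cast_le (α := ℝ)).2 hn

lemma extensionCost_natCeil_clog_le {n D : ℕ} {x : ℝ} (hn : 2 ≤ n) (hx : 1 < x / Real.logb 2 n)
    (hD : D ≤ x) :
    extensionCost ⌈x / Real.logb 2 n⌉₊ (Nat.clog 2 n) D ≤ 20 * x := by
  set L := Real.logb 2 n
  have hL : 1 ≤ L := one_le_logb_two_natCast hn
  have hLx : L < x := (one_lt_div (by linarith)).1 hx
  have hm : (⌈x / L⌉₊ : ℝ) ≤ 2 * (x / L) := Nat.ceil_le_two_mul (by linarith)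
  have ht : (Nat.clog 2 n : ℝ) ≤ 2 * L := by
    rw [← Real.natCeil_logb_natCast]
    exact Nat.ceil_le_two_mul (by simpa [L] using by linarith)
  have hmt : (⌈x / L⌉₊ * Nat.clog 2 n : ℝ) ≤ 4 * x := by
    calc (⌈x / L⌉₊ * Nat.clog 2 n : ℝ) ≤ 2 * (x / L) * (2 * L) := by gcongr
      _ = 4 * x := by field_simp; ring
  have hdiv : x / L ≤ x := div_le_self (by linarith) hL
  rw [extensionCost]
  push_cast
  linarith

/-- For every `k ≥ 2` there is `c = c(k) > 0` such that every ordered graph on `n`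
vertices with all degrees less than `c·n` and no induced ordered `P_k` has a bi-clique
of size at least `c·n / log₂ n` in its complement. -/
theorem monotone_path_free_biclique (k : ℕ) (hk : 2 ≤ k) :
    ∃ c : ℝ, 0 < c ∧
      ∀ (n : ℕ) (G : SimpleGraph (Fin n)),
        (∀ v : Fin n, ((G.neighborSet v).ncard : ℝ) < c * n) →
        ¬ ContainsOrdered (monotonePath k) G →
        HasBicliqueGe Gᶜ (c * n / Real.logb 2 n) := by
  classical
  obtain ⟨r, rfl⟩ : ∃ r, k = r + 1 := ⟨k - 1, by omega⟩
  refine ⟨1 / (20 * (r + 2)), by positivity, fun n G hdeg hfree => ?_⟩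
  set c : ℝ := 1 / (20 * (r + 2)) with hc
  rcases lt_or_ge n 2 with hn | hn
  -- The quotient is `0`, because `logb 2 0 = logb 2 1 = 0`.
  · exact hasBicliqueGe_of_nonpos _ (by interval_cases n <;> simp)
  by_contra hno
  have : Nonempty (Fin n) := ⟨⟨0, by omega⟩⟩
  have hmax : G.maxDegree < c * n := maxDegree_lt_of_forall_ncard_neighborSet_lt hdeg
  have hlarge : 1 < c * n / Real.logb 2 n := by
    by_contra! hsmall
    refine hno (hasBicliqueGe_compl_of_maxDegree_add_one_lt ?_ hsmall)
    have hc_half : c ≤ 1 / 2 := one_div_le_one_div_of_le two_pos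
      (by linarith [r.cast_nonneg' (α := ℝ)])
    have hn_two : (2 : ℝ) ≤ n := mod_cast hn
    have hmax_lt : (G.maxDegree + 1 : ℝ) < n := by nlinarith
    simpa using (mod_cast hmax_lt : G.maxDegree + 1 < n)
  refine hfree ((isJoined_natCeil_of_not_hasBicliqueGe_compl hno).exists_isInducedMonotonePath
    (t := Nat.clog 2 n) (by simpa using Nat.le_pow_clog one_lt_two n) ?_)
  rw [Fintype.card_fin, ← Nat.cast_le (α := ℝ)]
  push_cast
  calc _ ≤ ((r + 2) * (20 * (c * n)) : ℝ) := by
        gcongr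
        exact extensionCost_natCeil_clog_le hn hlarge hmax.le
    _ = n := by rw [hc]; field_simp
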